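/- The closed unit ball B in ℝ³ admits a paradoxical decomposition, using the group of isometries of ℝ³, in which every piece has the Baire property: there is a partition of B into finitely many sets A₁, …, Aₙ, B₁, …, B_m, each having the Baire property, and isometries α₁, …, αₙ, β₁, …, β_m of ℝ³, such that the sets αᵢAᵢ are pairwise disjoint with union B and the sets βⱼBⱼ are pairwise disjoint with union B. -/

import Mathlib

/-!
The argument follows Marks and Unger. Let a group act by homeomorphisms on a Polish space, and
suppose that every finite set of points of `X` has at least twice as many neighbours in `Y`, for a
relation given by finitely many group elements. Match, one stage at a time, the points of an open
set whose points lie far apart in the graph of overlapping neighbourhoods: since the matched pairs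
are sparse, removing them only doubles the size from which connected finite sets must have
definitely more neighbours than points, and so Hall's condition survives every stage. The union of
these open sets is dense, so the choices can be made with the Baire property on an invariant
comeagre set; on the remaining meagre set the axiom of choice and Hall's theorem suffice. Applied
to the ball `B` and a disjoint translate `g B`, this embeds `B ∪ g B` piecewise into `B`, and the
Banach–Schröder–Bernstein argument turns the embedding into a paradoxical decomposition. Expansion
comes from a free group of rational rotations, which acts freely off the lines through rational
points; a reflection and a translation move those lines into the free part.
-/

open Function Set
open scoped Pointwise Finset Classical

section Graph

variable {V κ : Type*} {G : SimpleGraph V} {F : Finset V}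

lemma exists_adj_of_preconnected_induce {s P : Set V} (hs : (G.induce s).Preconnected)
    (hPs : P ⊆ s) (hP : P.Nonempty) (hne : (s \ P).Nonempty) :
    ∃ u ∈ P, ∃ v ∈ s \ P, G.Adj u v := by
  obtain ⟨a, ha⟩ := hP
  obtain ⟨b, hbs, hbP⟩ := hne
  obtain ⟨p⟩ := hs ⟨a, hPs ha⟩ ⟨b, hbs⟩
  obtain ⟨d, -, hfst, hsnd⟩ := p.exists_boundary_dart (Subtype.val ⁻¹' P) ha hbP
  exact ⟨d.fst, hfst, d.snd, ⟨d.snd.2, hsnd⟩, d.adj⟩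

lemma exists_ssubset_forall_not_adj_of_not_preconnected_induce
    (hF : ¬ (G.induce (F : Set V)).Preconnected) :
    ∃ P ⊂ F, P.Nonempty ∧ ∀ u ∈ P, ∀ v ∈ F \ P, ¬ G.Adj u v := by
  simp only [SimpleGraph.Preconnected, not_forall] at hF
  obtain ⟨a, b, hab⟩ := hF
  refine ⟨{u ∈ F | ∃ h : u ∈ F, (G.induce (F : Set V)).Reachable a ⟨u, h⟩}, ?_, ?_, ?_⟩
  · exact Finset.filter_ssubset.2 ⟨b, b.2, fun ⟨_, h⟩ => hab h⟩
  · exact ⟨a, Finset.mem_filter.2 ⟨a.2, a.2, .rfl⟩⟩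
  · intro u hu v hv huv
    obtain ⟨-, hu, hau⟩ := Finset.mem_filter.1 hu
    obtain ⟨hv, hnv⟩ := Finset.mem_sdiff.1 hv
    have huv' : (G.induce (F : Set V)).Adj ⟨u, hu⟩ ⟨v, hv⟩ := huv
    exact hnv (Finset.mem_filter.2 ⟨hv, hv, hau.trans huv'.reachable⟩)

lemma min_succ_card_le_card_filter_edist_le (hF : (G.induce (F : Set V)).Preconnected) {v : V}
    (hv : v ∈ F) (r : ℕ) : min (r + 1) #F ≤ #{u ∈ F | G.edist v u ≤ r} := by
  let ball (r : ℕ) : Finset V := {u ∈ F | G.edist v u ≤ r}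
  change min (r + 1) #F ≤ #(ball r)
  have hball (r : ℕ) : ball r ⊆ F := Finset.filter_subset _ _
  induction r with
  | zero =>
    have : v ∈ ball 0 := by simp [ball, hv]
    exact (min_le_left _ _).trans (Finset.card_pos.2 ⟨v, this⟩)
  | succ r ih =>
    have hmono : ball r ⊆ ball (r + 1) :=
      Finset.monotone_filter_right _ fun u _ hu => hu.trans (by gcongr; omega)
    by_cases hall : F ⊆ ball r
    · exact (min_le_right _ _).trans (Finset.card_le_card (hall.trans hmono))
    obtain ⟨a, ha, b, hb, hab⟩ := exists_adj_of_preconnected_induce hF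
      (P := ball r) (Finset.coe_subset.2 (hball r)) ⟨v, by simp [ball, hv]⟩
      (by exact_mod_cast Finset.sdiff_nonempty.2 hall)
    have hvb : G.edist v b ≤ (r + 1 : ℕ) := by
      push_cast
      exact G.edist_triangle.trans (add_le_add (Finset.mem_filter.1 ha).2
        (SimpleGraph.edist_eq_one_iff_adj.2 hab).le)
    have : #(ball r) < #(ball (r + 1)) := Finset.card_lt_card <|
      hmono.ssubset_of_mem_notMem (Finset.mem_filter.2 ⟨hb.1, hvb⟩) hb.2
    omega

lemma edist_le_of_card_le_succ (hF : (G.induce (F : Set V)).Preconnected) {u v : V} {r : ℕ}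
    (hv : v ∈ F) (hu : u ∈ F) (hcard : #F ≤ r + 1) : G.edist v u ≤ r := by
  have hball := min_succ_card_le_card_filter_edist_le hF hv r
  rw [min_eq_right hcard] at hball
  exact Finset.card_filter_eq_iff.1 (hball.antisymm' (Finset.card_filter_le _ _)) u hu

lemma min_succ_card_mul_card_le (hF : (G.induce (F : Set V)).Preconnected) {R : Finset κ}
    {f : κ → V} {j : ℕ} (hf : ∀ r ∈ R, f r ∈ F)
    (hsep : (R : Set κ).Pairwise fun r r' => (2 * j : ℕ) < G.edist (f r) (f r')) :
    min (j + 1) #F * #R ≤ #F := by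
  let ball (r : κ) : Finset V := {u ∈ F | G.edist (f r) u ≤ j}
  have hdisj : (R : Set κ).PairwiseDisjoint ball := fun r hr r' hr' hne => by
    refine Finset.disjoint_left.2 fun u hu hu' => (hsep hr hr' hne).not_ge ?_
    calc G.edist (f r) (f r') ≤ G.edist (f r) u + G.edist u (f r') := G.edist_triangle
      _ ≤ j + j := add_le_add (Finset.mem_filter.1 hu).2
          (SimpleGraph.edist_comm.trans_le (Finset.mem_filter.1 hu').2)
      _ = (2 * j : ℕ) := by push_cast; ring
  calc min (j + 1) #F * #R = ∑ r ∈ R, min (j + 1) #F := by simp [mul_comm]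
    _ ≤ ∑ r ∈ R, #(ball r) :=
      Finset.sum_le_sum fun r hr => min_succ_card_le_card_filter_edist_le hF (hf r hr) j
    _ = #(R.biUnion ball) := (Finset.card_biUnion hdisj).symm
    _ ≤ #F := Finset.card_le_card (Finset.biUnion_subset.2 fun _ _ => Finset.filter_subset _ _)

end Graph

section Hall

variable {ι α : Type*} {s t : ι → Finset α} {n k : ℕ} {X X' : Set ι} {Y Y' : Set α}
  {F F' : Finset ι}

/-- The elements of `Y` that belong to some member `t i`, `i ∈ F`, of a family of finite sets.
Viewing `t` as a bipartite graph, this is the set of neighbours of `F` in `Y`. -/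
noncomputable def neighborsIn (t : ι → Finset α) (Y : Set α) (F : Finset ι) : Finset α :=
  {y ∈ F.biUnion t | y ∈ Y}

lemma mem_neighborsIn {y : α} : y ∈ neighborsIn t Y F ↔ (∃ i ∈ F, y ∈ t i) ∧ y ∈ Y := by
  simp [neighborsIn]

lemma neighborsIn_mono (ht : ∀ i, s i ⊆ t i) (hF : F ⊆ F') (hY : Y ⊆ Y') :
    neighborsIn s Y F ⊆ neighborsIn t Y' F' := fun y hy => by
  obtain ⟨⟨i, hi, hyi⟩, hyY⟩ := mem_neighborsIn.1 hy
  exact mem_neighborsIn.2 ⟨⟨i, hF hi, ht i hyi⟩, hY hyY⟩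

lemma card_neighborsIn_diff_add_card_neighborsIn_inter (Z : Set α) :
    #(neighborsIn t (Y \ Z) F) + #(neighborsIn t (Y ∩ Z) F) = #(neighborsIn t Y F) := by
  rw [← Finset.card_union_of_disjoint]
  · congr 1
    ext y
    by_cases y ∈ Z <;> simp_all [mem_neighborsIn]
  · refine Finset.disjoint_left.2 fun y hy hy' => ?_
    exact (mem_neighborsIn.1 hy).2.2 (mem_neighborsIn.1 hy').2.2

/-- The Hall condition with expansion factor `n`: every finite set of indices in `X` has at least
`n` times as many neighbours in `Y`. For `n = 1` this is the condition of Hall's theorem. -/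
def Expands (t : ι → Finset α) (n : ℕ) (X : Set ι) (Y : Set α) : Prop :=
  ∀ F : Finset ι, ↑F ⊆ X → n * #F ≤ #(neighborsIn t Y F)

lemma Expands.mono (h : Expands s n X Y) (ht : ∀ i, s i ⊆ t i) (hX : X' ⊆ X) (hY : Y ⊆ Y') :
    Expands t n X' Y' := fun F hF =>
  (h F (hF.trans hX)).trans (Finset.card_le_card (neighborsIn_mono ht subset_rfl hY))

lemma Expands.union (h : Expands t (2 * n) X Y) (h' : Expands t (2 * n) X' Y) :
    Expands t n (X ∪ X') Y := fun F hF => by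
  have hle {P : Finset ι} (hP : P ⊆ F) : #(neighborsIn t Y P) ≤ #(neighborsIn t Y F) :=
    Finset.card_le_card (neighborsIn_mono (fun _ => subset_rfl) hP subset_rfl)
  have h₁ := (h {i ∈ F | i ∈ X} (by simp [Set.subset_def])).trans (hle (Finset.filter_subset _ _))
  have h₂ := (h' {i ∈ F | i ∉ X} fun i hi => by
    obtain ⟨hiF, hiX⟩ := Finset.mem_filter.1 hi
    exact (hF hiF).resolve_left hiX).trans (hle (Finset.filter_subset _ _))
  rw [← Finset.card_filter_add_card_filter_not (s := F) (· ∈ X)]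
  linarith

theorem expands_one_iff_exists_injective :
    Expands t 1 X Y ↔ ∃ f : X → α, Injective f ∧ ∀ i : X, f i ∈ t i ∧ f i ∈ Y := by
  have hall := Finset.all_card_le_biUnion_card_iff_exists_injective
    fun i : X => {y ∈ t i | y ∈ Y}
  simp only [Finset.mem_filter] at hall
  rw [← hall]
  have hneighbors (F : Finset X) : (F.biUnion fun i => {y ∈ t i | y ∈ Y}) =
      neighborsIn t Y (F.image (↑)) := by
    ext y
    simp only [Finset.mem_biUnion, Finset.mem_filter, mem_neighborsIn, Finset.mem_image]
    aesop
  refine ⟨fun h F => ?_, fun h F hF => ?_⟩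
  · simpa [hneighbors, Finset.card_image_of_injective _ Subtype.val_injective] using
      h (F.image (↑)) (by simp)
  · lift F to Finset X using hF
    simpa [hneighbors, Finset.card_image_of_injective _ Subtype.val_injective] using h F

lemma Expands.exists_diff_singleton (h : Expands t 1 X Y) {i : ι} (hi : i ∈ X) :
    ∃ y ∈ t i, y ∈ Y ∧ Expands t 1 (X \ {i}) (Y \ {y}) := by
  obtain ⟨f, hf, hft⟩ := expands_one_iff_exists_injective.1 h
  refine ⟨f ⟨i, hi⟩, (hft _).1, (hft _).2, expands_one_iff_exists_injective.2
    ⟨f ∘ Set.inclusion sdiff_subset, hf.comp (Set.inclusion_injective _), fun j =>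
      ⟨(hft _).1, (hft _).2, fun hj => j.2.2 ?_⟩⟩⟩
  exact congrArg Subtype.val (hf hj)

/-- The graph on the indices of a family of sets in which two indices are adjacent when their sets
meet. Its distance is half the distance in the bipartite graph defined by the family. -/
def overlapGraph (t : ι → Finset α) : SimpleGraph ι :=
  .fromRel fun i j => ¬ Disjoint (t i) (t j)

lemma edist_overlapGraph_le_one {i j : ι} {y : α} (hi : y ∈ t i) (hj : y ∈ t j) :
    (overlapGraph t).edist i j ≤ 1 := by
  rw [SimpleGraph.edist_le_one_iff_adj_or_eq, or_iff_not_imp_right]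
  exact fun hne => (SimpleGraph.fromRel_adj _ _ _).2
    ⟨hne, .inl (Finset.not_disjoint_iff.2 ⟨y, hi, hj⟩)⟩

lemma disjoint_of_not_adj_overlapGraph {i j : ι} (hne : i ≠ j) (h : ¬ (overlapGraph t).Adj i j) :
    Disjoint (t i) (t j) := by
  by_contra hd
  exact h ((SimpleGraph.fromRel_adj _ _ _).2 ⟨hne, .inl hd⟩)

/-- The Hall condition, strengthened for connected sets of at least `k` indices to expansion by the
factor `1 + 1 / k`. -/
def ExpandsAtScale (t : ι → Finset α) (k : ℕ) (X : Set ι) (Y : Set α) : Prop :=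
  ∀ F : Finset ι, ↑F ⊆ X → ((overlapGraph t).induce (F : Set ι)).Preconnected →
    #F ≤ #(neighborsIn t Y F) ∧ (k ≤ #F → (k + 1) * #F ≤ k * #(neighborsIn t Y F))

lemma Expands.expandsAtScale_one (h : Expands t 2 X Y) : ExpandsAtScale t 1 X Y := fun F hF _ => by
  have := h F hF
  constructor <;> intros <;> omega

lemma ExpandsAtScale.expands_one (h : ExpandsAtScale t k X Y) : Expands t 1 X Y := by
  intro F
  induction F using Finset.strongInduction with
  | H F ih =>
  intro hF
  rw [one_mul]
  by_cases hconn : ((overlapGraph t).induce (F : Set ι)).Preconnected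
  · exact (h F hF hconn).1
  obtain ⟨P, hPF, hP, hadj⟩ := exists_ssubset_forall_not_adj_of_not_preconnected_induce hconn
  have hQF : F \ P ⊂ F := Finset.sdiff_ssubset hPF.subset hP
  have hdisj : Disjoint (neighborsIn t Y P) (neighborsIn t Y (F \ P)) := by
    refine Finset.disjoint_left.2 fun y hy hy' => ?_
    obtain ⟨⟨i, hi, hyi⟩, -⟩ := mem_neighborsIn.1 hy
    obtain ⟨⟨j, hj, hyj⟩, -⟩ := mem_neighborsIn.1 hy'
    have hne : i ≠ j := fun hij => (Finset.mem_sdiff.1 hj).2 (hij ▸ hi)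
    exact Finset.disjoint_left.1 (disjoint_of_not_adj_overlapGraph hne (hadj i hi j hj)) hyi hyj
  have hsub {Q : Finset ι} (hQ : Q ⊆ F) : neighborsIn t Y Q ⊆ neighborsIn t Y F :=
    neighborsIn_mono (fun _ => subset_rfl) hQ subset_rfl
  calc #F = 1 * #P + 1 * #(F \ P) := by
        have := Finset.card_sdiff_add_card_eq_card hPF.subset
        omega
    _ ≤ #(neighborsIn t Y P) + #(neighborsIn t Y (F \ P)) :=
      add_le_add (ih P hPF (.trans (mod_cast hPF.subset) hF))
        (ih _ hQF (.trans (mod_cast hQF.subset) hF))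
    _ = #(neighborsIn t Y P ∪ neighborsIn t Y (F \ P)) :=
      (Finset.card_union_of_disjoint hdisj).symm
    _ ≤ #(neighborsIn t Y F) :=
      Finset.card_le_card (Finset.union_subset (hsub hPF.subset) (hsub hQF.subset))

lemma exists_pairwise_lt_edist_of_mem_neighborsIn [Nonempty ι] {a : Set ι} {m : ι → α}
    (hm : ∀ i ∈ a, m i ∈ t i)
    (hsep : a.Pairwise fun i j => (n + 2 : ℕ) < (overlapGraph t).edist i j) :
    ∃ c : α → ι,
      (∀ y ∈ neighborsIn t (Y ∩ m '' a) F,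
        c y ∈ F ∧ ∃ i ∈ a, m i = y ∧ (overlapGraph t).edist i (c y) ≤ 1) ∧
      (neighborsIn t (Y ∩ m '' a) F : Set α).Pairwise
        fun y y' => n < (overlapGraph t).edist (c y) (c y') := by
  have hex : ∀ y ∈ neighborsIn t (Y ∩ m '' a) F,
      ∃ j ∈ F, ∃ i ∈ a, m i = y ∧ (overlapGraph t).edist i j ≤ 1 := fun y hy => by
    obtain ⟨⟨j, hj, hyj⟩, -, i, hi, rfl⟩ := mem_neighborsIn.1 hy
    exact ⟨j, hj, i, hi, rfl, edist_overlapGraph_le_one (hm i hi) hyj⟩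
  choose! c hc using hex
  refine ⟨c, hc, fun y hy y' hy' hne => ?_⟩
  obtain ⟨-, i, hi, rfl, hic⟩ := hc y hy
  obtain ⟨-, i', hi', rfl, hic'⟩ := hc y' hy'
  by_contra! hle
  refine (hsep hi hi' (ne_of_apply_ne m hne)).not_ge ?_
  calc (overlapGraph t).edist i i' ≤ (overlapGraph t).edist i (c (m i)) +
        ((overlapGraph t).edist (c (m i)) (c (m i')) + (overlapGraph t).edist (c (m i')) i') :=
        SimpleGraph.edist_triangle.trans (by gcongr; exact SimpleGraph.edist_triangle)
    _ ≤ 1 + (n + 1) := by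
      gcongr
      exact SimpleGraph.edist_comm.trans_le hic'
    _ = (n + 2 : ℕ) := by push_cast; ring

lemma Expands.card_le_card_neighborsIn_of_edist_le {n : ℕ} {i c : ι}
    (h : Expands t 1 {j ∈ X | (overlapGraph t).edist i j ≤ n} Y) (hF : ↑F ⊆ X)
    (hconn : ((overlapGraph t).induce (F : Set ι)).Preconnected) (hn : #F ≤ n) (hc : c ∈ F)
    (hic : (overlapGraph t).edist i c ≤ 1) : #F ≤ #(neighborsIn t Y F) := by
  have hpos := Finset.card_pos.2 ⟨c, hc⟩
  rw [← one_mul #F]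
  refine h F fun j hj => ⟨hF hj, ?_⟩
  calc (overlapGraph t).edist i j ≤ 1 + (n - 1 : ℕ) := SimpleGraph.edist_triangle.trans
        (add_le_add hic (edist_le_of_card_le_succ hconn hc hj (by omega)))
    _ = n := by norm_cast; omega

theorem ExpandsAtScale.diff (h : ExpandsAtScale t k X Y) (hk : 0 < k) {a : Set ι} {m : ι → α}
    (hm : ∀ i ∈ a, m i ∈ t i)
    (hsep : a.Pairwise fun i j => (4 * k : ℕ) < (overlapGraph t).edist i j)
    (hloc : ∀ i ∈ a, Expands t 1 {j ∈ X \ {i} | (overlapGraph t).edist i j ≤ (2 * k : ℕ)}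
      (Y \ {m i})) :
    ExpandsAtScale t (2 * k) (X \ a) (Y \ m '' a) := by
  intro F hF hconn
  rcases F.eq_empty_or_nonempty with rfl | hne
  · simp
  have : Nonempty ι := hne.to_type
  have hFX := hF.trans sdiff_subset
  have hcard := card_neighborsIn_diff_add_card_neighborsIn_inter (t := t) (Y := Y) (F := F) (m '' a)
  obtain ⟨c, hc, hcsep⟩ := exists_pairwise_lt_edist_of_mem_neighborsIn (Y := Y) (F := F)
    (n := 2 * (2 * k - 1)) hm (by convert hsep using 5; omega)
  set R := neighborsIn t (Y ∩ m '' a) F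
  have hpack := min_succ_card_mul_card_le hconn (fun y hy => (hc y hy).1) hcsep
  rw [Nat.sub_add_cancel (by omega)] at hpack
  obtain ⟨hHall, hscale⟩ := h F hFX hconn
  rcases le_or_gt (2 * k) #F with hle | hlt
  · rw [min_eq_left hle] at hpack
    have := hscale (by omega)
    constructor <;> intros <;> nlinarith
  refine ⟨?_, fun hle => absurd hle hlt.not_ge⟩
  rw [min_eq_right hlt.le] at hpack
  have hR : #R ≤ 1 := Nat.le_of_mul_le_mul_left (by omega) hne.card_pos
  rcases R.eq_empty_or_nonempty with hR0 | ⟨y, hy⟩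
  · simp_all
  obtain ⟨hcF, i, hi, rfl, hic⟩ := hc y hy
  have hlocal := (hloc i hi).card_le_card_neighborsIn_of_edist_le
    (fun j hj => ⟨hFX hj, fun hji => (hF hj).2 (hji ▸ hi)⟩) hconn hlt.le hcF hic
  refine hlocal.trans (Finset.card_le_card fun z hz => ?_)
  obtain ⟨hzt, hzY, hz⟩ := mem_neighborsIn.1 hz
  exact mem_neighborsIn.2 ⟨hzt, hzY, fun hza => hz <|
    Finset.card_le_one.1 hR z (mem_neighborsIn.2 ⟨hzt, hzY, hza⟩) _ hy⟩

end Hall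

section Translates

variable {Γ E : Type*} [Group Γ] [MulAction Γ E] {S T : Finset Γ} {X Y Z : Set E} {m n : ℕ}
  {x y : E}

/-- The finite set `S • x`. The family `translates S` is the bipartite graph joining every point
`x` to the points `g • x`, `g ∈ S`. -/
noncomputable def translates (S : Finset Γ) (x : E) : Finset E := S.image (· • x)

lemma mem_translates : y ∈ translates S x ↔ ∃ g ∈ S, g • x = y := Finset.mem_image

lemma smul_mem_translates {g : Γ} (hg : g ∈ S) (x : E) : g • x ∈ translates S x :=
  mem_translates.2 ⟨g, hg, rfl⟩

lemma translates_mono (h : S ⊆ T) (x : E) : translates S x ⊆ translates T x :=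
  Finset.image_subset_image h

lemma Expands.trans (h : Expands (translates S) m X Y) (h' : Expands (translates T) n Y Z) :
    Expands (translates (T * S)) (n * m) X Z := fun F hF => by
  have hsub : neighborsIn (translates T) Z (neighborsIn (translates S) Y F) ⊆
      neighborsIn (translates (T * S)) Z F := fun z hz => by
    obtain ⟨⟨y, hy, hyz⟩, hz⟩ := mem_neighborsIn.1 hz
    obtain ⟨⟨x, hx, hxy⟩, -⟩ := mem_neighborsIn.1 hy
    obtain ⟨g, hg, rfl⟩ := mem_translates.1 hxy
    obtain ⟨g', hg', rfl⟩ := mem_translates.1 hyz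
    exact mem_neighborsIn.2 ⟨⟨x, hx, mem_translates.2
      ⟨g' * g, Finset.mul_mem_mul hg' hg, mul_smul g' g x⟩⟩, hz⟩
  calc n * m * #F = n * (m * #F) := mul_assoc ..
    _ ≤ n * #(neighborsIn (translates S) Y F) := Nat.mul_le_mul_left n (h F hF)
    _ ≤ #(neighborsIn (translates T) Z (neighborsIn (translates S) Y F)) :=
      h' _ fun y hy => (mem_neighborsIn.1 hy).2
    _ ≤ #(neighborsIn (translates (T * S)) Z F) := Finset.card_le_card hsub

lemma expands_one_of_mapsTo {g : Γ} (h : MapsTo (g • ·) X Y) : Expands (translates {g}) 1 X Y :=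
  expands_one_iff_exists_injective.2 ⟨fun x => g • (x : E),
    (MulAction.injective g).comp Subtype.val_injective,
    fun x => ⟨smul_mem_translates (Finset.mem_singleton_self g) _, h x.2⟩⟩

lemma Expands.sdiff_of_smul_mem_iff (h : Expands (translates S) n X Y)
    (hZ : ∀ g ∈ S, ∀ x, g • x ∈ Z ↔ x ∈ Z) : Expands (translates S) n (X \ Z) (Y \ Z) :=
  fun F hF => by
  refine (h F (hF.trans sdiff_subset)).trans (Finset.card_le_card fun y hy => ?_)
  obtain ⟨⟨x, hx, hxy⟩, hyY⟩ := mem_neighborsIn.1 hy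
  obtain ⟨g, hg, rfl⟩ := mem_translates.1 hxy
  exact mem_neighborsIn.2 ⟨⟨x, hx, hxy⟩, hyY, (hZ g hg x).not.2 (hF hx).2⟩

lemma Expands.pow (h : Expands (translates S) n X X) (k : ℕ) :
    Expands (translates (S ^ k)) (n ^ k) X X := by
  induction k with
  | zero => exact expands_one_of_mapsTo (by simp [MapsTo])
  | succ k ih => simpa only [pow_succ] using h.trans ih

lemma Expands.map {G : Type*} [Group G] [MulAction G E] {S : Finset G}
    (h : Expands (translates S) n X Y) (f : G →* Γ) (hf : ∀ g (x : E), f g • x = g • x) :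
    Expands (translates (S.image f)) n X Y := by
  refine h.mono (fun x y hy => ?_) subset_rfl subset_rfl
  obtain ⟨g, hg, rfl⟩ := mem_translates.1 hy
  exact mem_translates.2 ⟨f g, Finset.mem_image_of_mem f hg, hf g x⟩

lemma mem_translates_of_walk (p : (overlapGraph (translates S)).Walk x y) :
    y ∈ translates (insert 1 (S⁻¹ * S) ^ p.length) x := by
  induction p with
  | nil => simp [mem_translates]
  | @cons x z y hadj p ih =>
    obtain ⟨g, hg, rfl⟩ := mem_translates.1 ih
    have hmeet : ¬ Disjoint (translates S x) (translates S z) := by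
      simpa [disjoint_comm] using ((SimpleGraph.fromRel_adj _ _ _).1 hadj).2
    obtain ⟨w, hwx, hwz⟩ := Finset.not_disjoint_iff.1 hmeet
    obtain ⟨a, ha, rfl⟩ := mem_translates.1 hwx
    obtain ⟨b, hb, hab⟩ := mem_translates.1 hwz
    have hba : b⁻¹ * a ∈ insert 1 (S⁻¹ * S) :=
      Finset.mem_insert_of_mem (Finset.mul_mem_mul (Finset.inv_mem_inv hb) ha)
    refine mem_translates.2 ⟨g * (b⁻¹ * a), ?_, ?_⟩
    · simpa only [SimpleGraph.Walk.length_cons, pow_succ] using Finset.mul_mem_mul hg hba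
    · rw [mul_smul, mul_smul, ← hab, inv_smul_smul]

lemma exists_finset_forall_mem_translates_of_edist_le (S : Finset Γ) (n : ℕ) :
    ∃ K : Finset Γ, ∀ x y : E, (overlapGraph (translates S)).edist x y ≤ n →
      y ∈ translates K x := by
  refine ⟨insert 1 (S⁻¹ * S) ^ n, fun x y h => ?_⟩
  obtain ⟨p, hp⟩ := SimpleGraph.exists_walk_of_edist_ne_top (h.trans_lt (ENat.natCast_lt_top n)).ne
  refine translates_mono (Finset.pow_subset_pow_right (Finset.mem_insert_self _ _) ?_) x
    (mem_translates_of_walk p)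
  exact_mod_cast hp.trans_le h

end Translates

section LocalExpansion

variable {Γ E : Type*} [Group Γ] [MulAction Γ E] {x : E}

lemma exists_injOn_eq_translates {K : Finset Γ} {F : Finset E} (hF : F ⊆ translates K x) :
    ∃ K' ⊆ K, InjOn (· • x) (K' : Set Γ) ∧ translates K' x = F := by
  have hsurj : SurjOn (· • x) (K : Set Γ) (F : Set E) := fun y hy => by
    simpa [mem_translates] using hF hy
  exact_mod_cast Finset.exists_subset_injOn_image_eq_of_surjOn _ _ hsurj

lemma card_translates_of_injOn {K : Finset Γ} (hK : InjOn (· • x) (K : Set Γ)) :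
    #(translates K x) = #K := Finset.card_image_of_injOn hK

lemma neighborsIn_translates (S K : Finset Γ) (Q : Set E) (x : E) :
    neighborsIn (translates S) Q (translates K x) = {y ∈ translates (S * K) x | y ∈ Q} := by
  ext y
  simp only [mem_neighborsIn, mem_translates, Finset.mem_filter, Finset.mem_mul]
  constructor
  · rintro ⟨⟨_, ⟨g, hg, rfl⟩, s, hs, rfl⟩, hy⟩
    exact ⟨⟨s * g, ⟨s, hs, g, hg, rfl⟩, mul_smul s g x⟩, hy⟩
  · rintro ⟨⟨_, ⟨s, hs, g, hg, rfl⟩, rfl⟩, hy⟩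
    exact ⟨⟨g • x, ⟨g, hg, rfl⟩, s, hs, (mul_smul s g x).symm⟩, hy⟩

lemma le_card_filter_translates_iff {L : Finset Γ} {Q : Set E} {m : ℕ} :
    m ≤ #{y ∈ translates L x | y ∈ Q} ↔
      ∃ L' ∈ L.powersetCard m, InjOn (· • x) (L' : Set Γ) ∧ ∀ g ∈ L', g • x ∈ Q := by
  rw [Finset.le_card_iff_exists_subset_card]
  constructor
  · rintro ⟨F, hF, rfl⟩
    obtain ⟨L', hL', hinj, rfl⟩ := exists_injOn_eq_translates (hF.trans (Finset.filter_subset _ _))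
    exact ⟨L', Finset.mem_powersetCard.2 ⟨hL', (card_translates_of_injOn hinj).symm⟩, hinj,
      fun g hg => (Finset.mem_filter.1 (hF (smul_mem_translates hg x))).2⟩
  · rintro ⟨L', hL', hinj, hQ⟩
    obtain ⟨hsub, rfl⟩ := Finset.mem_powersetCard.1 hL'
    refine ⟨translates L' x, fun y hy => ?_, card_translates_of_injOn hinj⟩
    obtain ⟨g, hg, rfl⟩ := mem_translates.1 hy
    exact Finset.mem_filter.2 ⟨smul_mem_translates (hsub hg) x, hQ g hg⟩

lemma expands_translates_inter_iff {S K : Finset Γ} {P Q : Set E} {n : ℕ} :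
    Expands (translates S) n (P ∩ translates K x) Q ↔
      ∀ K' ∈ K.powerset, InjOn (· • x) (K' : Set Γ) → (∀ g ∈ K', g • x ∈ P) →
        n * #K' ≤ #{y ∈ translates (S * K') x | y ∈ Q} := by
  constructor
  · intro h K' hK' hinj hP
    rw [← neighborsIn_translates, ← card_translates_of_injOn hinj]
    refine h _ fun y hy => ?_
    obtain ⟨g, hg, rfl⟩ := mem_translates.1 hy
    exact ⟨hP g hg, smul_mem_translates (Finset.mem_powerset.1 hK' hg) x⟩
  · intro h F hF
    obtain ⟨K', hK', hinj, rfl⟩ := exists_injOn_eq_translates fun y hy => (hF hy).2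
    rw [neighborsIn_translates, card_translates_of_injOn hinj]
    exact h K' (Finset.mem_powerset.2 hK') hinj fun g hg => (hF (smul_mem_translates hg x)).1

variable [TopologicalSpace E] {ι : Type*}

lemma baireMeasurableSet_setOf_forall_mem (I : Finset ι) {p : ι → E → Prop}
    (hp : ∀ i ∈ I, BaireMeasurableSet {x | p i x}) : BaireMeasurableSet {x | ∀ i ∈ I, p i x} := by
  convert BaireMeasurableSet.biInter I.countable_toSet hp using 1
  ext x
  simp

lemma baireMeasurableSet_setOf_exists_mem (I : Finset ι) {p : ι → E → Prop}
    (hp : ∀ i ∈ I, BaireMeasurableSet {x | p i x}) : BaireMeasurableSet {x | ∃ i ∈ I, p i x} := by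
  convert BaireMeasurableSet.biUnion I.countable_toSet hp using 1
  ext x
  simp

lemma baireMeasurableSet_setOf_imp {p q : E → Prop} (hp : BaireMeasurableSet {x | p x})
    (hq : BaireMeasurableSet {x | q x}) : BaireMeasurableSet {x | p x → q x} := by
  convert hp.compl.union hq using 1
  ext x
  simp [imp_iff_not_or]

lemma baireMeasurableSet_of_isClosed {s : Set E} (hs : IsClosed s) : BaireMeasurableSet s :=
  .of_compl hs.isOpen_compl.baireMeasurableSet

variable [T2Space E] [ContinuousConstSMul Γ E]

lemma baireMeasurableSet_setOf_injOn_smul (K : Finset Γ) :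
    BaireMeasurableSet {x : E | InjOn (· • x) (K : Set Γ)} :=
  baireMeasurableSet_setOf_forall_mem K fun g _ =>
    baireMeasurableSet_setOf_forall_mem K fun h _ =>
      baireMeasurableSet_setOf_imp
        (baireMeasurableSet_of_isClosed
          (isClosed_eq (continuous_const_smul g) (continuous_const_smul h)))
        (MeasurableSet.const (g = h))

lemma baireMeasurableSet_setOf_expands_translates (S K : Finset Γ) {P Q : E → Set E} {n : ℕ}
    (hP : ∀ g : Γ, BaireMeasurableSet {x | g • x ∈ P x})
    (hQ : ∀ g : Γ, BaireMeasurableSet {x | g • x ∈ Q x}) :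
    BaireMeasurableSet {x | Expands (translates S) n (P x ∩ translates K x) (Q x)} := by
  simp only [expands_translates_inter_iff, le_card_filter_translates_iff]
  refine baireMeasurableSet_setOf_forall_mem _ fun K' _ =>
    baireMeasurableSet_setOf_imp (baireMeasurableSet_setOf_injOn_smul K') <|
    baireMeasurableSet_setOf_imp (baireMeasurableSet_setOf_forall_mem _ fun g _ => hP g) <|
    baireMeasurableSet_setOf_exists_mem _ fun L _ =>
    (baireMeasurableSet_setOf_injOn_smul L).inter <|
    baireMeasurableSet_setOf_forall_mem _ fun g _ => hQ g

end LocalExpansion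

section PiecewiseTranslation

lemma image_iUnion_iterate_image_sdiff {E : Type*} {X B : Set E} {f : E → E}
    (hf : MapsTo f X B) (hBX : B ⊆ X) :
    f '' ⋃ n, f^[n] '' (X \ B) = (⋃ n, f^[n] '' (X \ B)) ∩ B := by
  have hfX (n : ℕ) : f^[n] '' (X \ B) ⊆ X :=
    (((hf.mono_right hBX).iterate n).mono_left sdiff_subset).image_subset
  rw [image_iUnion]
  apply subset_antisymm
  · refine iUnion_subset fun n => subset_inter ?_ ((hf.mono_left (hfX n)).image_subset)
    rw [← image_comp, ← iterate_succ']
    exact subset_iUnion (fun n => f^[n] '' (X \ B)) (n + 1)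
  · rintro y ⟨hy, hyB⟩
    obtain ⟨n, x, hx, rfl⟩ := mem_iUnion.1 hy
    cases n with
    | zero => exact absurd hyB hx.2
    | succ n =>
      rw [iterate_succ_apply'] at hyB ⊢
      exact mem_iUnion.2 ⟨n, _, ⟨x, hx, rfl⟩, rfl⟩

variable {Γ E : Type*} [Group Γ] [MulAction Γ E] [TopologicalSpace E] {S T : Finset Γ}
  {φ ψ : E → Γ} {B X Y Z : Set E}

lemma baireMeasurableSet_smul [ContinuousConstSMul Γ E] (g : Γ) (hX : BaireMeasurableSet X) :
    BaireMeasurableSet (g • X) := by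
  rw [← preimage_smul_inv]
  exact hX.preimage (continuous_const_smul _) (isOpenMap_smul _)

/-- `φ` describes a bijection `x ↦ φ x • x` from `X` to `Y` which translates each of finitely many
Baire measurable pieces of `X` by an element of `S`. -/
structure IsPiecewiseTranslation (S : Finset Γ) (φ : E → Γ) (X Y : Set E) : Prop where
  mapsTo : MapsTo φ X S
  baireMeasurableSet_piece (g : Γ) : BaireMeasurableSet (X ∩ φ ⁻¹' {g})
  bijOn : BijOn (fun x => φ x • x) X Y

namespace IsPiecewiseTranslation

lemma mono (h : IsPiecewiseTranslation S φ X Y) (hST : S ⊆ T) : IsPiecewiseTranslation T φ X Y :=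
  ⟨fun _ hx => hST (h.mapsTo hx), h.baireMeasurableSet_piece, h.bijOn⟩

lemma restrict (h : IsPiecewiseTranslation S φ X Y) (hZX : Z ⊆ X) (hZ : BaireMeasurableSet Z) :
    IsPiecewiseTranslation S φ Z ((fun x => φ x • x) '' Z) where
  mapsTo := h.mapsTo.mono_left hZX
  baireMeasurableSet_piece g := by
    simpa only [← inter_assoc, inter_eq_left.2 hZX] using hZ.inter (h.baireMeasurableSet_piece g)
  bijOn := (h.bijOn.injOn.mono hZX).bijOn_image

lemma biUnion_pieces (h : IsPiecewiseTranslation S φ X Y) : ⋃ g ∈ S, X ∩ φ ⁻¹' {g} = X := by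
  ext x
  simpa using fun hx => h.mapsTo hx

lemma biUnion_smul_pieces (h : IsPiecewiseTranslation S φ X Y) :
    ⋃ g ∈ S, g • (X ∩ φ ⁻¹' {g}) = Y := by
  rw [← h.bijOn.image_eq]
  conv_rhs => rw [← h.biUnion_pieces]
  simp only [image_iUnion₂]
  refine iUnion₂_congr fun g _ => image_congr fun x hx => ?_
  rw [show φ x = g from hx.2]

protected lemma iUnion {ι : Type*} [Countable ι] {φ : ι → E → Γ} {X Y : ι → Set E}
    (h : ∀ i, IsPiecewiseTranslation S (φ i) (X i) (Y i)) (hX : Pairwise (Disjoint on X))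
    (hY : Pairwise (Disjoint on Y)) :
    ∃ ψ, IsPiecewiseTranslation S ψ (⋃ i, X i) (⋃ i, Y i) := by
  have hchoice (x : E) : ∃ g, ∀ i, x ∈ X i → g = φ i x := by
    by_cases hx : ∃ i, x ∈ X i
    · obtain ⟨i, hi⟩ := hx
      refine ⟨φ i x, fun j hj => ?_⟩
      rw [hX.eq (not_disjoint_iff.2 ⟨x, hi, hj⟩)]
    · exact ⟨1, fun i hi => absurd ⟨i, hi⟩ hx⟩
  choose ψ hψ using hchoice
  have hbij (i : ι) : BijOn (fun x => ψ x • x) (X i) (Y i) :=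
    (h i).bijOn.congr fun x hx => by simp only [hψ x i hx]
  refine ⟨ψ, fun x hx => ?_, fun g => ?_, bijOn_iUnion hbij ?_⟩
  · obtain ⟨i, hi⟩ := mem_iUnion.1 hx
    exact hψ x i hi ▸ (h i).mapsTo hi
  · rw [iUnion_inter]
    refine .iUnion fun i => ?_
    convert (h i).baireMeasurableSet_piece g using 1
    ext x
    exact and_congr_right fun hx => by simp only [mem_preimage, hψ x i hx]
  · intro x hx y hy hxy
    obtain ⟨i, hi⟩ := mem_iUnion.1 hx
    obtain ⟨j, hj⟩ := mem_iUnion.1 hy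
    obtain rfl : i = j :=
      hY.eq (not_disjoint_iff.2 ⟨_, (hbij i).mapsTo hi, mem_of_eq_of_mem hxy ((hbij j).mapsTo hj)⟩)
    exact (hbij i).injOn hi hj hxy

protected lemma union {X' Y' : Set E} (h : IsPiecewiseTranslation S φ X Y)
    (h' : IsPiecewiseTranslation S ψ X' Y') (hX : Disjoint X X') (hY : Disjoint Y Y') :
    ∃ χ, IsPiecewiseTranslation S χ (X ∪ X') (Y ∪ Y') := by
  simp only [union_eq_iUnion]
  exact IsPiecewiseTranslation.iUnion (φ := fun b => cond b φ ψ) (Bool.forall_bool.2 ⟨h', h⟩)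
    (pairwise_disjoint_on_bool.2 hX) (pairwise_disjoint_on_bool.2 hY)

lemma const (g : Γ) (hX : BaireMeasurableSet X) :
    IsPiecewiseTranslation {g} (fun _ => g) X (g • X) where
  mapsTo _ _ := Finset.mem_coe.2 (Finset.mem_singleton_self g)
  baireMeasurableSet_piece g' := hX.inter (MeasurableSet.const (g = g'))
  bijOn := (MulAction.injective g).injOn.bijOn_image

variable [ContinuousConstSMul Γ E]

lemma baireMeasurableSet_target (h : IsPiecewiseTranslation S φ X Y) : BaireMeasurableSet Y := by
  rw [← h.biUnion_smul_pieces]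
  exact .biUnion S.countable_toSet fun g _ =>
    baireMeasurableSet_smul g (h.baireMeasurableSet_piece g)

lemma trans (h : IsPiecewiseTranslation S φ X Y) (h' : IsPiecewiseTranslation T ψ Y Z) :
    IsPiecewiseTranslation (T * S) (fun x => ψ (φ x • x) * φ x) X Z where
  mapsTo x hx := by
    exact_mod_cast Finset.mul_mem_mul (h'.mapsTo (h.bijOn.mapsTo hx)) (h.mapsTo hx)
  baireMeasurableSet_piece g := by
    have hpieces : X ∩ (fun x => ψ (φ x • x) * φ x) ⁻¹' {g} =
        ⋃ s ∈ S, (X ∩ φ ⁻¹' {s}) ∩ (s • ·) ⁻¹' (Y ∩ ψ ⁻¹' {g * s⁻¹}) := by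
      ext x
      simp only [mem_inter_iff, mem_preimage, mem_singleton_iff, mem_iUnion, exists_prop]
      constructor
      · rintro ⟨hx, rfl⟩
        exact ⟨φ x, h.mapsTo hx, ⟨hx, rfl⟩, h.bijOn.mapsTo hx, by group⟩
      · rintro ⟨s, -, ⟨hx, rfl⟩, -, hψ⟩
        exact ⟨hx, by rw [hψ]; group⟩
    rw [hpieces]
    exact .biUnion S.countable_toSet fun s _ => (h.baireMeasurableSet_piece s).inter <|
      (h'.baireMeasurableSet_piece _).preimage (continuous_const_smul s) (isOpenMap_smul s)
  bijOn := (h'.bijOn.comp h.bijOn).congr fun x _ => (mul_smul _ _ _).symm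

theorem exists_of_subset (h : IsPiecewiseTranslation S φ X Y) (hX : BaireMeasurableSet X)
    (hB : BaireMeasurableSet B) (hYB : Y ⊆ B) (hBX : B ⊆ X) :
    ∃ ψ, IsPiecewiseTranslation (insert 1 S) ψ X B := by
  let f : E → E := fun x => φ x • x
  have hf : MapsTo f X B := h.bijOn.mapsTo.mono_right hYB
  let W : Set E := ⋃ n, f^[n] '' (X \ B)
  have hfX (n : ℕ) : f^[n] '' (X \ B) ⊆ X :=
    (((hf.mono_right hBX).iterate n).mono_left sdiff_subset).image_subset
  have hWX : W ⊆ X := iUnion_subset hfX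
  have hXBW : X \ B ⊆ W := subset_iUnion_of_subset 0 (image_id _).superset
  have hW : BaireMeasurableSet W := .iUnion fun n => by
    induction n with
    | zero => simpa using hX.diff hB
    | succ n ih =>
      rw [iterate_succ', image_comp]
      exact (h.restrict (hfX n) ih).baireMeasurableSet_target
  have hfW : f '' W = W ∩ B := image_iUnion_iterate_image_sdiff hf hBX
  have hmove := (h.restrict hWX hW).mono (Finset.subset_insert 1 S)
  have hstay := (const (1 : Γ) (hX.diff hW)).mono
    (Finset.singleton_subset_iff.2 (Finset.mem_insert_self 1 S))
  rw [one_smul] at hstay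
  obtain ⟨ψ, hψ⟩ := hmove.union hstay disjoint_sdiff_right
    (disjoint_sdiff_right.mono_left (hfW.trans_subset inter_subset_left))
  have hB_eq : f '' W ∪ X \ W = B := by
    rw [hfW]
    ext x
    have := @hBX x
    have := @hXBW x
    simp only [mem_union, mem_inter_iff, mem_sdiff] at *
    tauto
  rw [union_sdiff_cancel hWX, hB_eq] at hψ
  exact ⟨ψ, hψ⟩

lemma exists_partition (h : IsPiecewiseTranslation S φ X Y) :
    ∃ (n : ℕ) (A : Fin n → Set E) (α : Fin n → Γ), (∀ i, BaireMeasurableSet (A i)) ∧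
      (∀ i j, i ≠ j → Disjoint (A i) (A j)) ∧ ⋃ i, A i = Y ∧
      (∀ i j, i ≠ j → Disjoint (α i • A i) (α j • A j)) ∧ ⋃ i, α i • A i = X := by
  let s (i : Fin #S) : Γ := S.equivFin.symm i
  have hs : Injective s := Subtype.val_injective.comp S.equivFin.symm.injective
  have hS {f : Γ → Set E} : ⋃ i, f (s i) = ⋃ g ∈ S, f g :=
    (S.equivFin.symm.iSup_comp (g := fun g : S => f g)).trans iSup_subtype
  refine ⟨#S, fun i => s i • (X ∩ φ ⁻¹' {s i}), fun i => (s i)⁻¹, fun i =>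
    baireMeasurableSet_smul _ (h.baireMeasurableSet_piece _), fun i j hij => ?_,
    hS.trans h.biUnion_smul_pieces, fun i j hij => ?_, ?_⟩
  · refine disjoint_left.2 ?_
    rintro _ ⟨x, ⟨hx, hxi⟩, rfl⟩ ⟨y, ⟨hy, hyj⟩, hxy⟩
    refine hs.ne hij ?_
    obtain rfl : x = y := h.bijOn.injOn hx hy <| by
      simpa only [mem_singleton_iff.1 hxi, mem_singleton_iff.1 hyj] using hxy.symm
    exact hxi.symm.trans hyj
  · simp only [inv_smul_smul]
    exact disjoint_left.2 fun x hx hx' => hs.ne hij (hx.2.symm.trans hx'.2)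
  · simpa only [inv_smul_smul] using hS.trans h.biUnion_pieces

end IsPiecewiseTranslation

end PiecewiseTranslation

section BaireMatching

lemma pairwise_disjoint_on_of_succ_eq_sdiff {α : Type*} {Z D : ℕ → Set α} (hD : ∀ n, D n ⊆ Z n)
    (hZ : ∀ n, Z (n + 1) = Z n \ D n) : Pairwise (Disjoint on D) := by
  have hanti : Antitone Z := antitone_nat_of_succ_le fun n => hZ n ▸ sdiff_subset
  refine (pairwise_disjoint_on D).2 fun m n hmn => ?_
  have hn : D n ⊆ Z m \ D m := (hD n).trans ((hanti hmn).trans (hZ m).subset)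
  exact disjoint_sdiff_right.mono_right hn

variable {Γ E : Type*} [Group Γ] [MulAction Γ E] [TopologicalSpace E] {S : Finset Γ}
  {X Y Z : Set E}

lemma exists_baireMeasurable_selection {κ : Type*} [Nonempty κ] (I : Finset κ) {Q : κ → Set E}
    (hQ : ∀ i, BaireMeasurableSet (Q i)) (hZ : BaireMeasurableSet Z)
    (hcover : ∀ x ∈ Z, ∃ i ∈ I, x ∈ Q i) :
    ∃ φ : E → κ, (∀ x ∈ Z, φ x ∈ I ∧ x ∈ Q (φ x)) ∧
      ∀ i, BaireMeasurableSet (Z ∩ φ ⁻¹' {i}) := by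
  induction I using Finset.induction_on generalizing Z with
  | empty =>
    exact ⟨fun _ => Classical.arbitrary κ, fun x hx => by simpa using hcover x hx,
      fun i => hZ.inter (MeasurableSet.const (Classical.arbitrary κ = i))⟩
  | insert j I _ ih =>
    obtain ⟨φ, hφ, hpieces⟩ := ih (Z := Z \ Q j) (hZ.diff (hQ j)) fun x hx => by
      obtain ⟨i, hi, hxi⟩ := hcover x hx.1
      obtain rfl | hi := Finset.mem_insert.1 hi
      exacts [absurd hxi hx.2, ⟨i, hi, hxi⟩]
    refine ⟨fun x => if x ∈ Q j then j else φ x, fun x hx => ?_, fun i => ?_⟩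
    · beta_reduce
      split_ifs with hxj
      exacts [⟨Finset.mem_insert_self j I, hxj⟩,
        (hφ x ⟨hx, hxj⟩).imp_left Finset.mem_insert_of_mem]
    · convert ((hZ.inter (hQ j)).inter (MeasurableSet.const (j = i))).union (hpieces i) using 1
      ext x
      by_cases hxj : x ∈ Q j <;> simp [hxj]

lemma residual_inter_invariant [ContinuousConstSMul Γ E] (S : Finset Γ) {U : Set E}
    (hU : U ∈ residual E) :
    ∃ C ∈ residual E, C ⊆ U ∧ ∀ s ∈ S, ∀ x, s • x ∈ C ↔ x ∈ C := by
  have : Countable (FreeGroup S) := FreeGroup.toWord_injective.countable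
  let word : FreeGroup S →* Γ := FreeGroup.lift (↑)
  refine ⟨⋂ w, (word w • ·) ⁻¹' U, countable_iInter_mem.2 fun w => ?_, fun x hx => ?_,
    fun s hs x => ?_⟩
  · exact tendsto_residual_of_isOpenMap (continuous_const_smul _) (isOpenMap_smul _) hU
  · simpa using mem_iInter.1 hx 1
  · have hword (w : FreeGroup S) : word w • s • x = word (w * .of ⟨s, hs⟩) • x := by
      simp [word, mul_smul]
    simp only [mem_iInter, mem_preimage, hword]
    exact ((Group.mulRight_bijective (FreeGroup.of (⟨s, hs⟩ : S))).surjective.forall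
      (p := fun w => word w • x ∈ U)).symm

lemma Expands.exists_isPiecewiseTranslation_of_isMeagre (h : Expands (translates S) 1 X Y)
    (hX : IsMeagre X) : ∃ φ, ∃ V ⊆ Y, IsPiecewiseTranslation S φ X V := by
  obtain ⟨f, hf, hfmem⟩ := expands_one_iff_exists_injective.1 h
  have hchoice : ∀ x ∈ X, ∃ g ∈ S, ∃ hx : x ∈ X, g • x = f ⟨x, hx⟩ := fun x hx =>
    (mem_translates.1 (hfmem ⟨x, hx⟩).1).imp fun _ hg => ⟨hg.1, hx, hg.2⟩
  choose! φ hφS hX' hφ using hchoice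
  refine ⟨φ, (fun x => φ x • x) '' X, image_subset_iff.2 fun x hx => ?_, hφS,
    fun g => (hX.mono inter_subset_left).baireMeasurableSet, InjOn.bijOn_image ?_⟩
  · rw [mem_preimage, hφ x hx]
    exact (hfmem ⟨x, hx⟩).2
  · exact fun x hx y hy hxy =>
      congrArg Subtype.val (hf ((hφ x hx).symm.trans (hxy.trans (hφ y hy))))

variable [T2Space E] [ContinuousConstSMul Γ E]

lemma exists_isOpen_subset_forall_smul_eq (R : Finset Γ) {U : Set E} (hU : IsOpen U) :
    ∃ V ⊆ U, IsOpen V ∧ (U.Nonempty → V.Nonempty) ∧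
      ∀ x ∈ V, ∀ g ∈ R, g • x ∈ V → g • x = x := by
  induction R using Finset.induction_on with
  | empty => exact ⟨U, Subset.rfl, hU, id, by simp⟩
  | insert g R _ ih =>
    obtain ⟨V, hVU, hV, hne, hfix⟩ := ih
    by_cases hg : ∀ x ∈ V, g • x = x
    · exact ⟨V, hVU, hV, hne, fun x hx =>
        (Finset.forall_mem_insert _ _ _).2 ⟨fun _ => hg x hx, hfix x hx⟩⟩
    · push Not at hg
      obtain ⟨x, hx, hgx⟩ := hg
      obtain ⟨V₁, V₂, hV₁, hV₂, hxV₁, hgxV₂, hdisj⟩ := t2_separation hgx.symm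
      refine ⟨V ∩ (V₁ ∩ (g • ·) ⁻¹' V₂), inter_subset_left.trans hVU,
        hV.inter (hV₁.inter (hV₂.preimage (continuous_const_smul g))),
        fun _ => ⟨x, hx, hxV₁, hgxV₂⟩, fun y hy => (Finset.forall_mem_insert _ _ _).2
          ⟨fun hgy => absurd hy.2.2 (hdisj.notMem_of_mem_left hgy.2.1),
            fun h hh hhy => hfix y hy.1 h hh hhy.1⟩⟩

lemma exists_isOpen_dense_iUnion_forall_smul_eq [SecondCountableTopology E] (R : ℕ → Finset Γ) :
    ∃ A : ℕ → Set E, (∀ n, IsOpen (A n)) ∧ Dense (⋃ n, A n) ∧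
      ∀ n, ∀ x ∈ A n, ∀ g ∈ R n, g • x ∈ A n → g • x = x := by
  have hB := TopologicalSpace.isBasis_countableBasis E
  obtain ⟨U, hU⟩ := ((TopologicalSpace.countable_countableBasis E).insert ∅).exists_eq_range
    (insert_nonempty _ _)
  have hUopen (n : ℕ) : IsOpen (U n) := by
    obtain h | h := hU.superset (mem_range_self n)
    exacts [h ▸ isOpen_empty, hB.isOpen h]
  choose A hAU hA hne hfix using fun n => exists_isOpen_subset_forall_smul_eq (R n) (hUopen n)
  refine ⟨A, hA, hB.dense_iff.2 fun V hV hVne => ?_, hfix⟩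
  obtain ⟨n, rfl⟩ := hU.subset (mem_insert_of_mem _ hV)
  obtain ⟨x, hx⟩ := hne n hVne
  exact ⟨x, hAU n hx, mem_iUnion_of_mem n hx⟩

theorem ExpandsAtScale.exists_isPiecewiseTranslation_inter {k : ℕ} {A : Set E}
    (h : ExpandsAtScale (translates S) k X Y) (hk : 0 < k) (hX : BaireMeasurableSet X)
    (hY : BaireMeasurableSet Y) (hA : BaireMeasurableSet A)
    (hsep : A.Pairwise fun x y => (4 * k : ℕ) < (overlapGraph (translates S)).edist x y) :
    ∃ φ, ∃ V ⊆ Y, IsPiecewiseTranslation S φ (X ∩ A) V ∧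
      ExpandsAtScale (translates S) (2 * k) (X \ A) (Y \ V) := by
  obtain ⟨K, hK⟩ := exists_finset_forall_mem_translates_of_edist_le (E := E) S (2 * k)
  let Q (s : Γ) : Set E :=
    {x | s • x ∈ Y} ∩ {x | Expands (translates S) 1 ((X \ {x}) ∩ translates K x) (Y \ {s • x})}
  have hpre {P : Set E} (hP : BaireMeasurableSet P) (g : Γ) : BaireMeasurableSet {x | g • x ∈ P} :=
    hP.preimage (continuous_const_smul g) (isOpenMap_smul g)
  have hne (g g' : Γ) : BaireMeasurableSet {x : E | g • x ≠ g' • x} :=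
    (isClosed_eq (continuous_const_smul g) (continuous_const_smul g')).isOpen_compl
      |>.baireMeasurableSet
  have hmoved (g : Γ) : BaireMeasurableSet {x : E | g • x ≠ x} := by
    simpa only [one_smul] using hne g 1
  have hQ (s : Γ) : BaireMeasurableSet (Q s) :=
    (hpre hY s).inter <| baireMeasurableSet_setOf_expands_translates S K
      (fun g => (hpre hX g).inter (hmoved g)) fun g => (hpre hY g).inter (hne g s)
  have hcover : ∀ x ∈ X ∩ A, ∃ s ∈ S, x ∈ Q s := fun x hx => by
    obtain ⟨y, hy, hyY, hexp⟩ := h.expands_one.exists_diff_singleton hx.1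
    obtain ⟨s, hs, rfl⟩ := mem_translates.1 hy
    exact ⟨s, hs, hyY, hexp.mono (fun _ => subset_rfl) inter_subset_left subset_rfl⟩
  obtain ⟨φ, hφ, hpieces⟩ := exists_baireMeasurable_selection S hQ (hX.inter hA) hcover
  have hmem {x : E} (hx : x ∈ X ∩ A) : φ x • x ∈ translates S x := smul_mem_translates (hφ x hx).1 x
  have hinj : InjOn (fun x => φ x • x) (X ∩ A) := fun x hx y hy hxy => by
    by_contra hne
    refine (hsep hx.2 hy.2 hne).not_ge
      ((edist_overlapGraph_le_one (hmem hx) (mem_of_eq_of_mem hxy (hmem hy))).trans ?_)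
    exact_mod_cast (by omega : 1 ≤ 4 * k)
  refine ⟨φ, _, image_subset_iff.2 fun x hx => (hφ x hx).2.1,
    ⟨fun x hx => (hφ x hx).1, hpieces, hinj.bijOn_image⟩, ?_⟩
  rw [← sdiff_self_inter]
  refine h.diff hk (fun x hx => hmem hx) (hsep.mono inter_subset_right) fun x hx => ?_
  exact (hφ x hx).2.2.mono (fun _ => subset_rfl) (fun y hy => ⟨hy.1, hK x y hy.2⟩) subset_rfl

theorem Expands.exists_isPiecewiseTranslation_inter_of_sparse {A : ℕ → Set E}
    (h : Expands (translates S) 2 X Y) (hX : BaireMeasurableSet X) (hY : BaireMeasurableSet Y)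
    (hA : ∀ n, BaireMeasurableSet (A n))
    (hsep : ∀ n, (A n).Pairwise fun x y =>
      (4 * 2 ^ n : ℕ) < (overlapGraph (translates S)).edist x y) :
    ∃ φ, ∃ V ⊆ Y, IsPiecewiseTranslation S φ (X ∩ ⋃ n, A n) V := by
  let P (n : ℕ) (Z : Set E × Set E) : Prop :=
    ExpandsAtScale (translates S) (2 ^ n) Z.1 Z.2 ∧ BaireMeasurableSet Z.1 ∧ BaireMeasurableSet Z.2
  have hstep (n : ℕ) (Z : Set E × Set E) (hZ : P n Z) : ∃ φ, ∃ V ⊆ Z.2,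
      IsPiecewiseTranslation S φ (Z.1 ∩ A n) V ∧ P (n + 1) (Z.1 \ A n, Z.2 \ V) := by
    obtain ⟨φ, V, hVZ, hφ, hexp⟩ := hZ.1.exists_isPiecewiseTranslation_inter (by positivity)
      hZ.2.1 hZ.2.2 (hA n) (hsep n)
    exact ⟨φ, V, hVZ, hφ, pow_succ' 2 n ▸ hexp, hZ.2.1.diff (hA n),
      hZ.2.2.diff hφ.baireMeasurableSet_target⟩
  choose! φ V hV hφ hP using hstep
  let Z (n : ℕ) : Set E × Set E := n.rec (X, Y) fun n Z => (Z.1 \ A n, Z.2 \ V n Z)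
  have hZ (n : ℕ) : P n (Z n) := by
    induction n with
    | zero => exact ⟨h.expandsAtScale_one, hX, hY⟩
    | succ n ih => exact hP n _ ih
  obtain ⟨ψ, hψ⟩ := IsPiecewiseTranslation.iUnion (fun n => hφ n _ (hZ n))
    (pairwise_disjoint_on_of_succ_eq_sdiff (Z := fun n => (Z n).1) (fun _ => inter_subset_left)
      fun _ => sdiff_self_inter.symm)
    (pairwise_disjoint_on_of_succ_eq_sdiff (Z := fun n => (Z n).2) (fun n => hV n _ (hZ n))
      fun _ => rfl)
  have hZX : Antitone fun n => (Z n).1 := antitone_nat_of_succ_le fun _ => sdiff_subset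
  have hZY : Antitone fun n => (Z n).2 := antitone_nat_of_succ_le fun _ => sdiff_subset
  have hdom : ⋃ n, (Z n).1 ∩ A n = X ∩ ⋃ n, A n := by
    refine subset_antisymm (iUnion_subset fun n => inter_subset_inter (hZX n.zero_le)
      (subset_iUnion A n)) fun x ⟨hxX, hxA⟩ => ?_
    by_contra hx
    simp only [mem_iUnion, mem_inter_iff, not_exists, not_and] at hx hxA
    have hxZ (n : ℕ) : x ∈ (Z n).1 := by
      induction n with
      | zero => exact hxX
      | succ n ih => exact ⟨ih, hx n ih⟩
    obtain ⟨n, hn⟩ := hxA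
    exact hx n (hxZ n) hn
  rw [hdom] at hψ
  exact ⟨ψ, _, iUnion_subset fun n => (hV n _ (hZ n)).trans (hZY n.zero_le), hψ⟩

theorem Expands.exists_isPiecewiseTranslation [SecondCountableTopology E]
    (h : Expands (translates S) 2 X Y) (hX : BaireMeasurableSet X) (hY : BaireMeasurableSet Y) :
    ∃ φ, ∃ V ⊆ Y, IsPiecewiseTranslation S φ X V := by
  choose R hR using fun n =>
    exists_finset_forall_mem_translates_of_edist_le (E := E) S (4 * 2 ^ n)
  obtain ⟨A, hA, hdense, hfix⟩ := exists_isOpen_dense_iUnion_forall_smul_eq (E := E) R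
  have hsep (n : ℕ) : (A n).Pairwise fun x y =>
      (4 * 2 ^ n : ℕ) < (overlapGraph (translates S)).edist x y := fun x hx y hy hne => by
    by_contra! hle
    obtain ⟨g, hg, rfl⟩ := mem_translates.1 (hR n x y hle)
    exact hne (hfix n x hx g hg hy).symm
  obtain ⟨φ, V, hVY, hφ⟩ := h.exists_isPiecewiseTranslation_inter_of_sparse hX hY
    (fun n => (hA n).baireMeasurableSet) hsep
  obtain ⟨C, hC, hCA, hinv⟩ := residual_inter_invariant S
    (residual_of_dense_open (isOpen_iUnion hA) hdense)
  have hXC := hX.inter (BaireMeasurableSet.of_mem_residual hC)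
  have hgeneric := hφ.restrict (inter_subset_inter_right X hCA) hXC
  have hmeagre : IsMeagre (X \ C) := by
    refine IsMeagre.mono (fun x hx => hx.2) (?_ : IsMeagre Cᶜ)
    rwa [IsMeagre, compl_compl]
  obtain ⟨ψ, W, hWY, hψ⟩ := (h.sdiff_of_smul_mem_iff hinv).expandsAtScale_one.expands_one
    |>.exists_isPiecewiseTranslation_of_isMeagre hmeagre
  have himage : (fun x => φ x • x) '' (X ∩ C) ⊆ Y ∩ C := image_subset_iff.2 fun x hx =>
    ⟨hVY (hφ.bijOn.mapsTo ⟨hx.1, hCA hx.2⟩), (hinv _ (hgeneric.mapsTo hx) x).2 hx.2⟩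
  obtain ⟨χ, hχ⟩ := hgeneric.union hψ disjoint_sdiff_inter.symm
    (disjoint_sdiff_inter.symm.mono himage hWY)
  rw [inter_union_sdiff] at hχ
  exact ⟨χ, _, union_subset (himage.trans inter_subset_left) (hWY.trans sdiff_subset), hχ⟩

theorem exists_isPiecewiseTranslation_pair_of_expands [SecondCountableTopology E] {B : Set E}
    {g : Γ} (h : Expands (translates S) 2 B B)
    (hB : BaireMeasurableSet B) (hg : Disjoint B (g • B)) :
    ∃ (T₁ T₂ : Finset Γ) (φ₁ φ₂ : E → Γ) (B₁ B₂ : Set E), Disjoint B₁ B₂ ∧ B₁ ∪ B₂ = B ∧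
      IsPiecewiseTranslation T₁ φ₁ B B₁ ∧ IsPiecewiseTranslation T₂ φ₂ B B₂ := by
  have hgB := baireMeasurableSet_smul g hB
  have hBgB := hB.union hgB
  have hback : Expands (translates {g⁻¹}) 1 (g • B) B :=
    expands_one_of_mapsTo fun x hx => mem_smul_set_iff_inv_smul_mem.1 hx
  have hexpands : Expands (translates (S ^ 2 ∪ S ^ 2 * {g⁻¹})) 2 (B ∪ g • B) B :=
    .union ((h.pow 2).mono (translates_mono Finset.subset_union_left) subset_rfl subset_rfl)
      ((hback.trans (h.pow 2)).mono (translates_mono Finset.subset_union_right) subset_rfl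
        subset_rfl)
  obtain ⟨φ, V, hVB, hφ⟩ := hexpands.exists_isPiecewiseTranslation hBgB hB
  obtain ⟨ψ, hψ⟩ := hφ.exists_of_subset hBgB hB hVB subset_union_left
  refine ⟨_, _, _, _, _, _, ?_, ?_, hψ.restrict subset_union_left hB,
    (IsPiecewiseTranslation.const g hB).trans (hψ.restrict subset_union_right hgB)⟩
  · exact hg.image hψ.bijOn.injOn subset_union_left subset_union_right
  · rw [← image_union, hψ.bijOn.image_eq]

end BaireMatching

section FreeGroup

lemma expands_card_of_injOn {κ ι α : Type*} [Fintype κ] {t : ι → Finset α} {X : Set ι} {Y : Set α}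
    {f : κ × ι → α} (hf : InjOn f (univ ×ˢ X)) (hft : ∀ k, ∀ i ∈ X, f (k, i) ∈ t i)
    (hfY : ∀ k, ∀ i ∈ X, f (k, i) ∈ Y) : Expands t (Fintype.card κ) X Y := fun F hF => by
  have hinj : InjOn f (Finset.univ ×ˢ F : Finset (κ × ι)) := hf.mono fun p hp =>
    mk_mem_prod (mem_univ p.1) (hF (Finset.mem_product.1 hp).2)
  rw [← Finset.card_univ, ← Finset.card_product, ← Finset.card_image_of_injOn hinj]
  refine Finset.card_le_card (Finset.image_subset_iff.2 fun p hp => ?_)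
  have hi := (Finset.mem_product.1 hp).2
  exact mem_neighborsIn.2 ⟨⟨p.2, hi, hft p.1 p.2 (hF hi)⟩, hfY p.1 p.2 (hF hi)⟩

theorem expands_card_of_forall_smul_eq {κ G E : Type*} [Fintype κ] [Group G] [MulAction G E]
    {S : Finset G} {c : κ → G → G} (hcS : ∀ k g, c k g ∈ S)
    (hc : Injective fun p : κ × G => c p.1 p.2 * p.2) {X : Set E}
    (hX : ∀ g : G, ∀ x ∈ X, g • x ∈ X) (hfree : ∀ x ∈ X, ∀ g : G, g • x = x → g = 1) :
    Expands (translates S) (Fintype.card κ) X X := by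
  let rep (x : E) : E := (Quotient.mk (MulAction.orbitRel G E) x).out
  have hrep (x : E) : ∃ g : G, g • rep x = x :=
    (MulAction.orbitRel G E).symm' (Quotient.mk_out (s := MulAction.orbitRel G E) x)
  have hrep_smul (g : G) (x : E) : rep (g • x) = rep x := by
    simp only [rep, MulAction.orbitRel.Quotient.quotient_smul_eq]
  choose γ hγ using hrep
  refine expands_card_of_injOn (f := fun p => c p.1 (γ p.2) • p.2) ?_
    (fun k x _ => smul_mem_translates (hcS k _) x) fun k x hx => hX _ x hx
  rintro ⟨k, x⟩ ⟨-, hx⟩ ⟨k', y⟩ - hxy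
  have hxy_rep : rep x = rep y := by
    simpa only [hrep_smul] using congrArg rep hxy
  have hrepX : rep x ∈ X := by
    simpa only [inv_smul_eq_iff.2 (hγ x).symm] using hX (γ x)⁻¹ x hx
  have hmul : c k (γ x) * γ x = c k' (γ y) * γ y := by
    refine (inv_mul_eq_one.1 (hfree (rep x) hrepX _ ?_)).symm
    rw [mul_smul, inv_smul_eq_iff, mul_smul, mul_smul, hγ x, hxy_rep, hγ y]
    exact hxy
  obtain ⟨rfl, hγxy⟩ := Prod.mk.inj (hc (a₁ := (k, γ x)) (a₂ := (k', γ y)) hmul)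
  rw [← hγ x, ← hγ y, hγxy, hxy_rep]

open FreeGroup in
theorem expands_two_of_freeGroup {E : Type*} [MulAction (FreeGroup Bool) E] {X : Set E}
    (hX : ∀ g : FreeGroup Bool, ∀ x ∈ X, g • x ∈ X)
    (hfree : ∀ x ∈ X, ∀ g : FreeGroup Bool, g • x = x → g = 1) :
    Expands (translates {1, (of true)⁻¹, (of false)⁻¹}) 2 X X := by
  let c (i : Bool) (g : FreeGroup Bool) : FreeGroup Bool :=
    if g ∈ startsWith (i, true) then 1 else (of i)⁻¹
  have hc_mem (i : Bool) (g : FreeGroup Bool) :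
      c i g * g ∈ startsWith (i, g ∈ startsWith (i, true)) := by
    by_cases hg : g ∈ startsWith (i, true)
    · simp [c, hg]
    · simpa [c, hg] using! startsWith_mk_mul (w := (i, false)) g (by simpa using hg)
  refine expands_card_of_forall_smul_eq (κ := Bool) (c := c) (fun i g => ?_) ?_ hX hfree
  · by_cases hg : g ∈ startsWith (i, true) <;> cases i <;> simp [c, hg]
  · rintro ⟨i, g⟩ ⟨j, h⟩ hgh
    have hij : (i, decide (g ∈ startsWith (i, true))) = (j, decide (h ∈ startsWith (j, true))) := by
      by_contra hne
      exact disjoint_left.1 (startsWith.disjoint_iff_ne.2 hne) (hc_mem i g)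
        (mem_of_eq_of_mem hgh (hc_mem j h))
    obtain ⟨rfl, hdec⟩ := Prod.mk.inj hij
    have hcgh : c i g = c i h := if_congr (decide_eq_decide.1 hdec) rfl rfl
    simp only [hcgh, mul_right_inj] at hgh
    rw [hgh]

end FreeGroup

section Rotations

open Matrix FreeGroup

lemma exists_prod_mulVec_eq_smul_of_isReduced {α n R : Type*} [Fintype n] [DecidableEq n]
    [CommRing R] [IsDomain R] {M : α × Bool → Matrix n n R} {u : α × Bool → n → R}
    (hM : ∀ s t : α × Bool, (s.1 = t.1 → s.2 = t.2) → ∃ d : R, d ≠ 0 ∧ M s *ᵥ u t = d • u s)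
    {s : α × Bool} {l : List (α × Bool)} (hl : IsReduced (s :: l)) :
    ∃ (x : n → R) (d : R), d ≠ 0 ∧ ((s :: l).map M).prod *ᵥ x = d • u s := by
  induction l generalizing s with
  | nil => simpa using ⟨u s, hM s s fun _ => rfl⟩
  | cons t l ih =>
    obtain ⟨hst, htl⟩ := isReduced_cons_cons.1 hl
    obtain ⟨x, d, hd, hx⟩ := ih htl
    obtain ⟨d', hd', hst⟩ := hM s t hst
    refine ⟨x, d * d', mul_ne_zero hd hd', ?_⟩
    rw [List.map_cons, List.prod_cons, ← mulVec_mulVec, hx, mulVec_smul, hst, smul_smul]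

/-- Five times the rotation by the angle `arccos (3 / 5)` about the third axis (for the letter
`true`) or the first axis (for `false`), or its inverse. -/
def letterMatrix : Bool × Bool → Matrix (Fin 3) (Fin 3) ℤ
  | (true, true) => !![3, -4, 0; 4, 3, 0; 0, 0, 5]
  | (true, false) => !![3, 4, 0; -4, 3, 0; 0, 0, 5]
  | (false, true) => !![5, 0, 0; 0, 3, -4; 0, 4, 3]
  | (false, false) => !![5, 0, 0; 0, 3, 4; 0, -4, 3]

lemma letterMatrix_mul_transpose (s : Bool × Bool) :
    letterMatrix s * (letterMatrix s)ᵀ = 25 := by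
  revert s; decide

lemma transpose_letterMatrix (i b : Bool) : (letterMatrix (i, b))ᵀ = letterMatrix (i, !b) := by
  revert i b; decide

/-- The matrix `letterMatrix s` has rank one modulo `5`; this vector spans its range. -/
def letterVector : Bool × Bool → Fin 3 → ZMod 5
  | (true, true) => ![1, 3, 0]
  | (true, false) => ![1, 2, 0]
  | (false, true) => ![0, 1, 3]
  | (false, false) => ![0, 1, 2]

lemma letterVector_ne_zero (s : Bool × Bool) : letterVector s ≠ 0 := by
  revert s; decide

lemma exists_letterMatrix_mulVec_letterVector (s t : Bool × Bool) (hst : s.1 = t.1 → s.2 = t.2) :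
    ∃ d : ZMod 5, d ≠ 0 ∧
      (letterMatrix s).map (Int.cast : ℤ → ZMod 5) *ᵥ letterVector t = d • letterVector s := by
  revert s t; decide

/-- The rotation with matrix `letterMatrix s / 5`. -/
def letterRotation (s : Bool × Bool) : orthogonalGroup (Fin 3) ℚ :=
  ⟨(5⁻¹ : ℚ) • (Int.castRingHom ℚ).mapMatrix (letterMatrix s), by
    rw [mem_orthogonalGroup_iff, transpose_smul, smul_mul_smul_comm, RingHom.mapMatrix_apply,
      ← transpose_map, ← Matrix.map_mul, letterMatrix_mul_transpose,
      ← RingHom.mapMatrix_apply, map_ofNat, Algebra.smul_def,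
      ← map_ofNat (algebraMap ℚ (Matrix (Fin 3) (Fin 3) ℚ)), ← _root_.map_mul]
    norm_num⟩

lemma letterRotation_not (i b : Bool) : letterRotation (i, !b) = (letterRotation (i, b))⁻¹ := by
  refine Subtype.ext (Eq.trans ?_ (conjTranspose_eq_transpose_of_trivial _).symm)
  simp only [letterRotation, RingHom.mapMatrix_apply, transpose_smul, ← transpose_map,
    transpose_letterMatrix]

/-- The representation of the free group on two generators by rational rotations about two
coordinate axes. -/
def freeRotation : FreeGroup Bool →* orthogonalGroup (Fin 3) ℚ :=
  FreeGroup.lift fun i => letterRotation (i, true)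

lemma freeRotation_mk (l : List (Bool × Bool)) :
    freeRotation (mk l) = (l.map letterRotation).prod := by
  refine (lift_mk).trans (congrArg List.prod (List.map_congr_left ?_))
  rintro ⟨i, b⟩ -
  cases b
  · exact (letterRotation_not i true).symm
  · rfl

lemma coe_freeRotation_mk (l : List (Bool × Bool)) :
    (freeRotation (mk l) : Matrix (Fin 3) (Fin 3) ℚ) =
      (5⁻¹ : ℚ) ^ l.length • (Int.castRingHom ℚ).mapMatrix (l.map letterMatrix).prod := by
  rw [freeRotation_mk]
  induction l with
  | nil => simp
  | cons s l ih =>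
    rw [List.map_cons, List.prod_cons, List.map_cons, List.prod_cons, List.length_cons, pow_succ',
      _root_.map_mul, ← smul_mul_smul_comm, ← ih]
    rfl

theorem freeRotation_injective : Injective freeRotation := by
  have : Fact (Nat.Prime 5) := ⟨Nat.prime_five⟩
  refine (injective_iff_map_eq_one _).2 fun g hg => by_contra fun hne => ?_
  obtain ⟨s, l, hsl⟩ := List.exists_cons_of_ne_nil (mt toWord_eq_nil_iff.1 hne)
  have hred : IsReduced (s :: l) := hsl ▸ isReduced_toWord
  have hprod : ((s :: l).map letterMatrix).prod = 5 ^ (l.length + 1) := by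
    have hmk := coe_freeRotation_mk (s :: l)
    rw [← hsl, mk_toWord, hg, hsl, List.length_cons, inv_pow, eq_inv_smul_iff₀ (by positivity)]
      at hmk
    refine Matrix.map_injective (Int.cast_injective (α := ℚ)) (hmk.symm.trans ?_)
    change _ = (Int.castRingHom ℚ).mapMatrix _
    rw [map_pow, map_ofNat, OneMemClass.coe_one, Algebra.smul_def, mul_one, map_pow, map_ofNat]
  obtain ⟨x, d, hd, hx⟩ := exists_prod_mulVec_eq_smul_of_isReduced
    (M := fun s => (Int.castRingHom (ZMod 5)).mapMatrix (letterMatrix s))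
    exists_letterMatrix_mulVec_letterVector hred
  have hzero : ((s :: l).map fun s => (Int.castRingHom (ZMod 5)).mapMatrix (letterMatrix s)).prod
      = 0 := by
    rw [show (fun s => (Int.castRingHom (ZMod 5)).mapMatrix (letterMatrix s)) =
      (Int.castRingHom (ZMod 5)).mapMatrix ∘ letterMatrix from rfl, ← List.map_map,
      ← map_list_prod, hprod, map_pow, map_ofNat]
    exact (pow_succ _ _).trans (mul_eq_zero_of_right _ (CharP.ofNat_eq_zero _ 5))
  rw [hzero, zero_mulVec] at hx
  exact smul_ne_zero hd (letterVector_ne_zero s) hx.symm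

variable {n : Type*} [Fintype n] [DecidableEq n]

/-- The linear operator on Euclidean space with a given rational matrix. -/
noncomputable def rationalOperator :
    Matrix n n ℚ →⋆* (EuclideanSpace ℝ n →L[ℝ] EuclideanSpace ℝ n) where
  toFun A := toEuclideanCLM (𝕜 := ℝ) ((Rat.castHom ℝ).mapMatrix A)
  map_one' := by rw [_root_.map_one, _root_.map_one]
  map_mul' A A' := by rw [_root_.map_mul, _root_.map_mul]
  map_star' A := by
    rw [← map_star]
    exact congrArg _ (Matrix.ext fun i j => by simp [star_eq_conjTranspose])

/-- The isometry of Euclidean space with a given rational orthogonal matrix. -/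
noncomputable def rationalIsometry :
    orthogonalGroup n ℚ →* (EuclideanSpace ℝ n ≃ᵢ EuclideanSpace ℝ n) where
  toFun A := (Unitary.linearIsometryEquiv (Unitary.map rationalOperator A)).toIsometryEquiv
  map_one' := by rw [_root_.map_one, _root_.map_one]; rfl
  map_mul' A A' := by rw [_root_.map_mul, _root_.map_mul]; rfl

lemma ofLp_rationalIsometry (A : orthogonalGroup n ℚ) (x : EuclideanSpace ℝ n) :
    (rationalIsometry A x).ofLp = (A : Matrix n n ℚ).map (Rat.cast : ℚ → ℝ) *ᵥ x.ofLp := rfl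

lemma rationalIsometry_zero (A : orthogonalGroup n ℚ) : rationalIsometry A 0 = 0 :=
  WithLp.ofLp_injective 2 (by rw [ofLp_rationalIsometry, WithLp.ofLp_zero, mulVec_zero])

end Rotations

local notation "ℝ³" => EuclideanSpace ℝ (Fin 3)

section RationalLines

/-- The union of the lines through the origin of `ℝ³` that contain a nonzero rational point. -/
def rationalLines : Set (ℝ³) :=
  {x | ∃ w : Fin 3 → ℚ, w ≠ 0 ∧ ∃ c : ℝ, ∀ i, x i = c * w i}

lemma mem_rationalLines_of_mul_eq {w : Fin 3 → ℚ} (hw : w ≠ 0) {x : ℝ³}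
    (h : ∀ i j, w i * x j = w j * x i) : x ∈ rationalLines := by
  obtain ⟨k, hk⟩ := Function.ne_iff.1 hw
  have hk' : (w k : ℝ) ≠ 0 := Rat.cast_ne_zero.2 hk
  exact ⟨w, hw, x k / w k, fun i => by rw [div_mul_eq_mul_div, eq_div_iff hk']; linarith [h k i]⟩

open Matrix in
lemma mem_rationalLines_of_mulVec_eq_transpose_mulVec {M : Matrix (Fin 3) (Fin 3) ℚ} (hM : Mᵀ ≠ M)
    {x : ℝ³} (hx : M.map (Rat.cast : ℚ → ℝ) *ᵥ x.ofLp =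
      Mᵀ.map (Rat.cast : ℚ → ℝ) *ᵥ x.ofLp) : x ∈ rationalLines := by
  have h0 := congrFun hx 0
  have h1 := congrFun hx 1
  have h2 := congrFun hx 2
  simp only [mulVec, dotProduct, map_apply, transpose_apply, Fin.sum_univ_three] at h0 h1 h2
  refine mem_rationalLines_of_mul_eq (w := ![M 1 2 - M 2 1, M 2 0 - M 0 2, M 0 1 - M 1 0])
    (fun hw => hM ?_) fun i j => ?_
  · have hw0 : M 1 2 - M 2 1 = 0 := congrFun hw 0
    have hw1 : M 2 0 - M 0 2 = 0 := congrFun hw 1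
    have hw2 : M 0 1 - M 1 0 = 0 := congrFun hw 2
    ext i j
    fin_cases i <;> fin_cases j <;> simp <;> linarith
  · fin_cases i <;> fin_cases j <;> simp <;> linarith

open Matrix in
lemma mem_rationalLines_of_rationalIsometry_eq {A : orthogonalGroup (Fin 3) ℚ} (hA : A ^ 2 ≠ 1)
    {x : ℝ³} (hx : rationalIsometry A x = x) : x ∈ rationalLines := by
  have hA_symm : (A : Matrix (Fin 3) (Fin 3) ℚ)ᵀ ≠ A := fun h => hA <| Subtype.ext <| by
    rw [SubmonoidClass.coe_pow, pow_two]
    nth_rewrite 2 [← h]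
    exact (mem_orthogonalGroup_iff _ _).1 A.2
  have hx_inv : rationalIsometry A⁻¹ x = x := by
    rw [map_inv]
    nth_rewrite 1 [← hx]
    exact IsometryEquiv.inv_apply_self _ _
  have hAx : (A : Matrix (Fin 3) (Fin 3) ℚ).map (Rat.cast : ℚ → ℝ) *ᵥ x.ofLp =
      (A : Matrix (Fin 3) (Fin 3) ℚ)ᵀ.map (Rat.cast : ℚ → ℝ) *ᵥ x.ofLp := by
    refine (congrArg WithLp.ofLp (hx.trans hx_inv.symm)).trans ?_
    rw [ofLp_rationalIsometry]
    rfl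
  exact mem_rationalLines_of_mulVec_eq_transpose_mulVec hA_symm hAx

open Matrix in
lemma rationalIsometry_mem_rationalLines (A : orthogonalGroup (Fin 3) ℚ)
    {x : ℝ³} (hx : x ∈ rationalLines) :
    rationalIsometry A x ∈ rationalLines := by
  obtain ⟨w, hw, c, hx⟩ := hx
  refine ⟨(A : Matrix (Fin 3) (Fin 3) ℚ) *ᵥ w, fun hAw => hw ?_, c, fun i => ?_⟩
  · rw [← one_mulVec w, ← (mem_orthogonalGroup_iff' _ _).1 A.2, ← mulVec_mulVec, hAw, mulVec_zero]
  · rw [ofLp_rationalIsometry]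
    simp only [mulVec, dotProduct, map_apply, hx, Rat.cast_sum, Rat.cast_mul, Finset.mul_sum,
      mul_left_comm]

lemma exists_ne_zero_forall_dotProduct_eq_zero {R : Type*} [CommRing R] [IsDomain R]
    (v w : Fin 3 → R) : ∃ z : Fin 3 → R, z ≠ 0 ∧ v ⬝ᵥ z = 0 ∧ w ⬝ᵥ z = 0 := by
  obtain ⟨z, hz, hvwz⟩ := Matrix.exists_mulVec_eq_zero_iff.2
    (Matrix.det_eq_zero_of_row_eq_zero (A := ![v, w, 0]) 2 fun _ => rfl)
  exact ⟨z, hz, congrFun hvwz 0, congrFun hvwz 1⟩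

lemma exists_linearIndependent_rat_real (n : ℕ) : ∃ v : Fin n → ℝ, LinearIndependent ℚ v :=
  exists_linearIndependent_of_le_rank
    (Real.rank_rat_real ▸ (Cardinal.natCast_lt_aleph0.trans Cardinal.aleph0_lt_continuum).le)

theorem exists_isometryEquiv_notMem_rationalLines :
    ∃ ρ : ℝ³ ≃ᵢ ℝ³, ρ 0 = 0 ∧
      ∀ x ∈ rationalLines, x ≠ 0 → ρ x ∉ rationalLines := by
  obtain ⟨v, hv⟩ := exists_linearIndependent_rat_real 3
  have hv_eq (z : Fin 3 → ℚ) (hz : ∑ i, (z i : ℝ) * v i = 0) : z = 0 :=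
    funext (Fintype.linearIndependent_iff.1 hv z (by simpa only [Rat.smul_def] using hz))
  let u : ℝ³ := WithLp.toLp 2 v
  refine ⟨(ℝ ∙ u).reflection.toIsometryEquiv, (ℝ ∙ u).reflection.map_zero, ?_⟩
  rintro x ⟨w, hw, c, hx⟩ hx0 ⟨w', -, c', hρx⟩
  have hux : inner ℝ u x ≠ 0 := by
    have hux_eq : inner ℝ u x = c * ∑ i, (w i : ℝ) * v i := by
      simp only [PiLp.inner_apply, u, hx, RCLike.inner_apply, conj_trivial, Finset.mul_sum,
        mul_assoc]
    have hc : c ≠ 0 := fun hc => hx0 (PiLp.ext fun i => by rw [hx, hc, zero_mul]; rfl)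
    exact hux_eq ▸ mul_ne_zero hc (mt (hv_eq w) hw)
  have hu : u ≠ 0 := fun hu => hux (by rw [hu, inner_zero_left])
  obtain ⟨z, hz, hwz, hwz'⟩ := exists_ne_zero_forall_dotProduct_eq_zero w w'
  have hwz_real : ∑ i, (w i : ℝ) * z i = 0 := mod_cast hwz
  have hwz'_real : ∑ i, (w' i : ℝ) * z i = 0 := mod_cast hwz'
  let k : ℝ := 2 * (inner ℝ u x / ‖u‖ ^ 2)
  have hρ (i : Fin 3) : c' * w' i + c * w i = k * v i := by
    rw [← hρx, ← hx, LinearIsometryEquiv.coe_toIsometryEquiv, Submodule.reflection_singleton_apply]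
    simp [k, u, mul_assoc]
  have hkz : k * ∑ i, (z i : ℝ) * v i = 0 := calc
    k * ∑ i, (z i : ℝ) * v i = ∑ i, z i * (c' * w' i + c * w i) := by
      simp only [hρ, Finset.mul_sum, mul_left_comm]
    _ = c' * ∑ i, (w' i : ℝ) * z i + c * ∑ i, (w i : ℝ) * z i := by
      simp only [Fin.sum_univ_three]; ring
    _ = 0 := by rw [hwz_real, hwz'_real, mul_zero, mul_zero, add_zero]
  have hk : k ≠ 0 := by positivity
  exact hz (hv_eq z ((mul_eq_zero.1 hkz).resolve_left hk))

end RationalLines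

section Ball

open Metric

instance isometryEquivMulAction {X : Type*} [PseudoEMetricSpace X] : MulAction (X ≃ᵢ X) X where
  smul f x := f x
  one_smul _ := rfl
  mul_smul _ _ _ := rfl

instance isometryEquivContinuousConstSMul {X : Type*} [PseudoEMetricSpace X] :
    ContinuousConstSMul (X ≃ᵢ X) X :=
  ⟨fun f => f.continuous⟩

lemma smul_mem_closedBall {X : Type*} [PseudoMetricSpace X] {f : X ≃ᵢ X} {x y : X} {r : ℝ}
    (hf : f x = x) (hy : y ∈ closedBall x r) : f • y ∈ closedBall x r :=
  hf ▸ f.isometry.mapsTo_closedBall x r hy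

lemma eq_one_of_freeRotation_fixes {g : FreeGroup Bool} {x : ℝ³}
    (hx : rationalIsometry (freeRotation g) x = x) (hxL : x ∉ rationalLines) : g = 1 := by
  by_contra hg
  refine hxL (mem_rationalLines_of_rationalIsometry_eq (fun hg2 => hg ?_) hx)
  rw [← map_pow, map_eq_one_iff _ freeRotation_injective] at hg2
  exact (pow_eq_one_iff_left two_ne_zero).1 hg2

lemma exists_expands_closedBall_sdiff_rationalLines (r : ℝ) :
    ∃ S : Finset (ℝ³ ≃ᵢ ℝ³), Expands (translates S) 2 (closedBall 0 r \ rationalLines)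
      (closedBall 0 r \ rationalLines) := by
  let Φ : FreeGroup Bool →* (ℝ³ ≃ᵢ ℝ³) := rationalIsometry.comp freeRotation
  let _ : MulAction (FreeGroup Bool) ℝ³ := MulAction.compHom ℝ³ Φ
  have hX (g : FreeGroup Bool) (x : ℝ³) (hx : x ∈ closedBall 0 r \ rationalLines) :
      g • x ∈ closedBall 0 r \ rationalLines := by
    refine ⟨smul_mem_closedBall (rationalIsometry_zero _) hx.1, fun hgx => hx.2 ?_⟩
    rw [← inv_smul_smul g x]
    exact rationalIsometry_mem_rationalLines (freeRotation g⁻¹) hgx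
  exact ⟨_, (expands_two_of_freeGroup hX fun x hx g hgx =>
    eq_one_of_freeRotation_fixes hgx hx.2).map Φ fun _ _ => rfl⟩

theorem exists_expands_closedBall {r : ℝ} (hr : 0 < r) :
    ∃ S : Finset (ℝ³ ≃ᵢ ℝ³),
      Expands (translates S) 2 (closedBall (0 : ℝ³) r) (closedBall (0 : ℝ³) r) := by
  obtain ⟨S, hS⟩ := exists_expands_closedBall_sdiff_rationalLines r
  obtain ⟨ρ, hρ0, hρ⟩ := exists_isometryEquiv_notMem_rationalLines
  obtain ⟨x, hxL, hx0, hxr⟩ : ∃ x ∈ rationalLines, x ≠ 0 ∧ x ∈ closedBall 0 r := by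
    refine ⟨EuclideanSpace.single 0 r, ⟨Pi.single 0 1, by simp, r, fun i => ?_⟩, ?_, ?_⟩
    · fin_cases i <;> simp
    · simpa using hr.ne'
    · simp [abs_of_pos hr]
  set B : Set ℝ³ := closedBall 0 r
  have hρ_maps : MapsTo (ρ • ·) ((B ∩ rationalLines) \ {0}) (B \ rationalLines) := fun y hy =>
    ⟨smul_mem_closedBall hρ0 hy.1.1, hρ y hy.1.2 hy.2⟩
  let τ : ℝ³ ≃ᵢ ℝ³ := IsometryEquiv.addRight (ρ x)
  have hτ_maps : MapsTo (τ • ·) {0} (B \ rationalLines) := by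
    rintro _ rfl
    exact mem_of_eq_of_mem (zero_add _) (hρ_maps ⟨⟨hxr, hxL⟩, hx0⟩)
  let T : Finset (ℝ³ ≃ᵢ ℝ³) := S ^ 2 ∪ (S ^ 3 * {ρ} ∪ S ^ 3 * {τ})
  have hT : Expands (translates T) (2 * 2) (B \ rationalLines) B :=
    (hS.pow 2).mono (translates_mono Finset.subset_union_left) Subset.rfl sdiff_subset
  have hTρ : Expands (translates T) (2 * (2 * 2)) ((B ∩ rationalLines) \ {0}) B :=
    ((expands_one_of_mapsTo hρ_maps).trans (hS.pow 3)).mono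
      (translates_mono (Finset.subset_union_left.trans Finset.subset_union_right))
      Subset.rfl sdiff_subset
  have hTτ : Expands (translates T) (2 * (2 * 2)) {0} B :=
    ((expands_one_of_mapsTo hτ_maps).trans (hS.pow 3)).mono
      (translates_mono (Finset.subset_union_right.trans Finset.subset_union_right))
      Subset.rfl sdiff_subset
  refine ⟨T, (hT.union (hTρ.union hTτ)).mono (fun _ => Subset.rfl) (fun y hy => ?_) Subset.rfl⟩
  by_cases hyL : y ∈ rationalLines
  · exact Or.inr ((em (y = 0)).symm.imp (fun hy0 => ⟨⟨hy, hyL⟩, hy0⟩) id)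
  · exact Or.inl ⟨hy, hyL⟩

lemma exists_disjoint_smul_closedBall {E : Type*} [NormedAddCommGroup E] [NormedSpace ℝ E]
    [Nontrivial E] (x : E) (r : ℝ) :
    ∃ g : E ≃ᵢ E, Disjoint (closedBall x r) (g • closedBall x r) := by
  obtain ⟨v, hv⟩ := exists_norm_eq E (c := 2 * |r| + 1) (by positivity)
  refine ⟨IsometryEquiv.addRight v, ?_⟩
  rw [show IsometryEquiv.addRight v • closedBall x r = closedBall (IsometryEquiv.addRight v x) r
    from IsometryEquiv.image_closedBall _ _ _]
  refine closedBall_disjoint_closedBall ?_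
  rw [IsometryEquiv.addRight_apply, dist_self_add_right, hv]
  linarith [le_abs_self r]

end Ball

/-- **Theorem (Dougherty–Foreman; rederived by Marks–Unger).** The closed unit ball in `ℝ³`
has a paradoxical decomposition by isometries of `ℝ³` in which every piece has the Baire
property: the ball can be partitioned into finitely many pieces `A₁,…,Aₙ, B₁,…,B_m`, each with
the Baire property, such that for suitable isometries `αᵢ, βⱼ` the sets `αᵢ(Aᵢ)` are pairwise
disjoint with union the ball, and the sets `βⱼ(Bⱼ)` are pairwise disjoint with union the
ball. -/
theorem baire_banach_tarski :
    ∃ (n m : ℕ)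
      (A : Fin n → Set (EuclideanSpace ℝ (Fin 3)))
      (B : Fin m → Set (EuclideanSpace ℝ (Fin 3)))
      (α : Fin n → (EuclideanSpace ℝ (Fin 3) ≃ᵢ EuclideanSpace ℝ (Fin 3)))
      (β : Fin m → (EuclideanSpace ℝ (Fin 3) ≃ᵢ EuclideanSpace ℝ (Fin 3))),
      -- every piece has the Baire property
      (∀ i, BaireMeasurableSet (A i)) ∧
      (∀ j, BaireMeasurableSet (B j)) ∧
      -- the pieces partition the closed unit ball
      (∀ i j, i ≠ j → Disjoint (A i) (A j)) ∧
      (∀ i j, i ≠ j → Disjoint (B i) (B j)) ∧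
      (∀ i j, Disjoint (A i) (B j)) ∧
      ((⋃ i, A i) ∪ (⋃ j, B j)) = Metric.closedBall (0 : EuclideanSpace ℝ (Fin 3)) 1 ∧
      -- the images of the `Aᵢ` are pairwise disjoint with union the ball
      (∀ i j, i ≠ j → Disjoint (α i '' A i) (α j '' A j)) ∧
      (⋃ i, α i '' A i) = Metric.closedBall (0 : EuclideanSpace ℝ (Fin 3)) 1 ∧
      -- the images of the `Bⱼ` are pairwise disjoint with union the ball
      (∀ i j, i ≠ j → Disjoint (β i '' B i) (β j '' B j)) ∧
      (⋃ j, β j '' B j) = Metric.closedBall (0 : EuclideanSpace ℝ (Fin 3)) 1 := by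
  obtain ⟨S, hS⟩ := exists_expands_closedBall one_pos
  obtain ⟨g, hg⟩ := exists_disjoint_smul_closedBall (0 : EuclideanSpace ℝ (Fin 3)) 1
  obtain ⟨T₁, T₂, φ₁, φ₂, B₁, B₂, hB₁₂, hB_union, hφ₁, hφ₂⟩ :=
    exists_isPiecewiseTranslation_pair_of_expands hS
      (baireMeasurableSet_of_isClosed Metric.isClosed_closedBall) hg
  obtain ⟨n, A, α, hA, hA_disj, rfl, hα_disj, hα_union⟩ := hφ₁.exists_partition
  obtain ⟨m, B, β, hB, hB_disj, rfl, hβ_disj, hβ_union⟩ := hφ₂.exists_partition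
  have hAB (i : Fin n) (j : Fin m) : Disjoint (A i) (B j) :=
    hB₁₂.mono (subset_iUnion A i) (subset_iUnion B j)
  exact ⟨n, m, A, B, α, β, hA, hB, hA_disj, hB_disj, hAB, hB_union, hα_disj, hα_union, hβ_disj,
    hβ_union⟩
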